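/- Let F : ℝ^n ⇒ ℝ^p be a nearly convex set-valued mapping and let Ω ⊆ ℝ^n be a nearly convex set with ri(dom F) ∩ ri Ω ≠ ∅. Then the restriction F_Ω (defined by F_Ω(x) = F(x) if x ∈ Ω and F_Ω(x) = ∅ otherwise) is a nearly convex set-valued mapping, and ri(gph F_Ω) = {(x, y) ∈ ℝ^n × ℝ^p | x ∈ ri(dom F) ∩ ri Ω and y ∈ ri F(x)}. -/

import Mathlib

open Set Metric

noncomputable section

/-- A set is *nearly convex* if it lies between a convex set and its closure. -/
def NearlyConvex {E : Type*} [NormedAddCommGroup E] [NormedSpace ℝ E] (s : Set E) : Prop :=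
  ∃ C : Set E, Convex ℝ C ∧ C ⊆ s ∧ s ⊆ closure C

/-- The *relative interior* of a set: points `a ∈ s` admitting `δ > 0` with
`B(a,δ) ∩ aff s ⊆ s`. -/
def ri {E : Type*} [NormedAddCommGroup E] [NormedSpace ℝ E] (s : Set E) : Set E :=
  {a | a ∈ s ∧ ∃ δ > 0, Metric.ball a δ ∩ (affineSpan ℝ s : Set E) ⊆ s}

/-- The graph of a set-valued mapping. -/
def gph {E P : Type*} (F : E → Set P) : Set (E × P) := {q | q.2 ∈ F q.1}

/-- The domain of a set-valued mapping. -/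
def domSV {E P : Type*} (F : E → Set P) : Set E := {x | (F x).Nonempty}

/-!
A nearly convex set `S` and a nonempty `D ⊆ S` satisfy `ri S = D` as soon as two purely algebraic
conditions hold: open segments from `D` to `S` stay in `D`, and segments from `S` to `D` can be
prolonged a little within `S`. Both conditions pass to affine images, affine preimages and
intersections, so `ri` commutes with these operations (with preimages and intersections, as soon
as the candidate is nonempty).

The theorem follows because everything in sight is obtained by such operations: `dom F` is a
projection of `gph F`, the values of `F` are affine preimages of `gph F`, and
`gph F_Ω = gph F ∩ (Ω × P)`.
-/

open Filter Topology AffineMap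

section RadialCore

variable {E G : Type*} [AddCommGroup E] [Module ℝ E] [AddCommGroup G] [Module ℝ G]

/-- `D` is a *radial core* of `S`: an algebraic substitute for the relative interior. In finite
dimension, a nonempty radial core of `S` is necessarily `ri S` (`IsRadialCore.ri_eq`).
Prolonging the segment from `b` to `a` slightly beyond `a` is expressed by `lineMap b a t` with
`t > 1` close to `1`. -/
structure IsRadialCore (D S : Set E) : Prop where
  subset : D ⊆ S
  openSegment_subset : ∀ ⦃a⦄, a ∈ D → ∀ ⦃b⦄, b ∈ S → openSegment ℝ a b ⊆ D
  eventually_lineMap_mem : ∀ ⦃a⦄, a ∈ D → ∀ ⦃b⦄, b ∈ S → ∀ᶠ t : ℝ in 𝓝[>] 1, lineMap b a t ∈ S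

namespace IsRadialCore

variable {D D₁ D₂ S S₁ S₂ : Set E}

theorem mem_of_eventually_lineMap_mem (h : IsRadialCore D S) {a b : E} (hb : b ∈ D)
    (hab : ∀ᶠ t : ℝ in 𝓝[>] 1, lineMap b a t ∈ S) : a ∈ D := by
  obtain ⟨t, ht, ht₁ : 1 < t⟩ := (hab.and self_mem_nhdsWithin).exists
  have ht₀ : 0 < t := zero_lt_one.trans ht₁
  have hmem : lineMap b (lineMap b a t) t⁻¹ ∈ openSegment ℝ b (lineMap b a t) :=
    lineMap_mem_openSegment ℝ _ _ ⟨inv_pos.2 ht₀, inv_lt_one_of_one_lt₀ ht₁⟩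
  rw [lineMap_lineMap_right, inv_mul_cancel₀ ht₀.ne', lineMap_apply_one] at hmem
  exact h.openSegment_subset hb ht hmem

theorem subset_of_nonempty (h₁ : IsRadialCore D₁ S) (h₂ : IsRadialCore D₂ S)
    (hne : D₂.Nonempty) : D₁ ⊆ D₂ := by
  obtain ⟨b, hb⟩ := hne
  exact fun a ha ↦
    h₂.mem_of_eventually_lineMap_mem hb (h₁.eventually_lineMap_mem ha (h₂.subset hb))

theorem image (h : IsRadialCore D S) (f : E →ᵃ[ℝ] G) : IsRadialCore (f '' D) (f '' S) where
  subset := image_mono h.subset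
  openSegment_subset := by
    rintro _ ⟨a, ha, rfl⟩ _ ⟨b, hb, rfl⟩
    rw [← image_openSegment]
    exact image_mono (h.openSegment_subset ha hb)
  eventually_lineMap_mem := by
    rintro _ ⟨a, ha, rfl⟩ _ ⟨b, hb, rfl⟩
    filter_upwards [h.eventually_lineMap_mem ha hb] with t ht
    exact ⟨_, ht, f.apply_lineMap b a t⟩

theorem preimage (h : IsRadialCore D S) (f : G →ᵃ[ℝ] E) :
    IsRadialCore (f ⁻¹' D) (f ⁻¹' S) where
  subset := preimage_mono h.subset
  openSegment_subset a ha b hb := by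
    rw [← image_subset_iff, image_openSegment]
    exact h.openSegment_subset ha hb
  eventually_lineMap_mem a ha b hb := by
    simpa only [mem_preimage, f.apply_lineMap] using h.eventually_lineMap_mem ha hb

theorem inter (h₁ : IsRadialCore D₁ S₁) (h₂ : IsRadialCore D₂ S₂) :
    IsRadialCore (D₁ ∩ D₂) (S₁ ∩ S₂) where
  subset := inter_subset_inter h₁.subset h₂.subset
  openSegment_subset _ ha _ hb :=
    subset_inter (h₁.openSegment_subset ha.1 hb.1) (h₂.openSegment_subset ha.2 hb.2)
  eventually_lineMap_mem _ ha _ hb :=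
    (h₁.eventually_lineMap_mem ha.1 hb.1).and (h₂.eventually_lineMap_mem ha.2 hb.2)

end IsRadialCore

end RadialCore

section RelativeInterior

variable {E : Type*} [NormedAddCommGroup E] [NormedSpace ℝ E] {C D S : Set E} {a b : E}

theorem IsRadialCore.nearlyConvex (h : IsRadialCore D S) (hne : D.Nonempty) : NearlyConvex S := by
  refine ⟨D, convex_iff_openSegment_subset.2 fun a ha b hb ↦
    h.openSegment_subset ha (h.subset hb), h.subset, fun b hb ↦ ?_⟩
  obtain ⟨a, ha⟩ := hne
  exact closure_mono (h.openSegment_subset ha hb)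
    (segment_subset_closure_openSegment (right_mem_segment ℝ a b))

theorem mem_ri_iff : a ∈ ri S ↔ a ∈ S ∧ S ∈ 𝓝[affineSpan ℝ S] a := by
  rw [mem_nhdsWithin_iff]
  rfl

theorem ri_subset : ri S ⊆ S := fun _ ha ↦ ha.1

theorem ri_eq_intrinsicInterior (S : Set E) : ri S = intrinsicInterior ℝ S := by
  ext a
  simp only [mem_ri_iff, mem_intrinsicInterior, mem_interior_iff_mem_nhds]
  constructor
  · rintro ⟨ha, hS⟩
    exact ⟨⟨a, subset_affineSpan ℝ S ha⟩, preimage_coe_mem_nhds_subtype.2 hS, rfl⟩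
  · rintro ⟨a, hS, rfl⟩
    have hS' : S ∈ 𝓝[affineSpan ℝ S] (a : E) := preimage_coe_mem_nhds_subtype.1 hS
    exact ⟨mem_of_mem_nhdsWithin a.2 hS', hS'⟩

theorem eventually_lineMap_mem_of_mem_ri (ha : a ∈ ri S) (hb : b ∈ affineSpan ℝ S) :
    ∀ᶠ t : ℝ in 𝓝[>] 1, lineMap b a t ∈ S := by
  obtain ⟨haS, hS⟩ := mem_ri_iff.1 ha
  have hlim : Tendsto (lineMap b a : ℝ → E) (𝓝 1) (𝓝[affineSpan ℝ S] a) := by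
    refine tendsto_nhdsWithin_iff.2 ⟨?_, .of_forall fun t ↦
      lineMap_mem t hb (subset_affineSpan ℝ S haS)⟩
    simpa only [lineMap_apply_one] using (lineMap_continuous (R := ℝ) (p := b) (q := a)).tendsto 1
  exact (hlim.mono_left nhdsWithin_le_nhds).eventually_mem hS

variable [FiniteDimensional ℝ E]

theorem closure_subset_affineSpan (S : Set E) : closure S ⊆ affineSpan ℝ S :=
  closure_minimal (subset_affineSpan ℝ S) (affineSpan ℝ S).closed_of_finiteDimensional

theorem affineSpan_eq_of_subset_closure (hCS : C ⊆ S) (hSC : S ⊆ closure C) :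
    affineSpan ℝ S = affineSpan ℝ C :=
  le_antisymm (affineSpan_le.2 (hSC.trans (closure_subset_affineSpan C))) (affineSpan_mono ℝ hCS)

theorem openSegment_ri_closure_subset_ri (hC : Convex ℝ C) (ha : a ∈ ri C) (hb : b ∈ closure C) :
    openSegment ℝ a b ⊆ ri C := by
  rw [openSegment_symm, openSegment_eq_image_lineMap]
  rintro _ ⟨t, ⟨ht₀, ht₁⟩, rfl⟩
  obtain ⟨haC, hCa⟩ := mem_ri_iff.1 ha
  set x := lineMap b a t with hx
  have hxspan : x ∈ affineSpan ℝ C :=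
    lineMap_mem t (closure_subset_affineSpan C hb) (subset_affineSpan ℝ C haC)
  have hlim : Tendsto (fun q : E × E ↦ lineMap q.1 q.2 t⁻¹) (𝓝[C] b ×ˢ 𝓝[affineSpan ℝ C] x)
      (𝓝[affineSpan ℝ C] a) := by
    refine tendsto_nhdsWithin_iff.2 ⟨?_, ?_⟩
    · have hax : lineMap b x t⁻¹ = a := by
        rw [hx, lineMap_lineMap_right, inv_mul_cancel₀ ht₀.ne', lineMap_apply_one]
      rw [← hax]
      exact (tendsto_fst.mono_right nhdsWithin_le_nhds).lineMap
        (tendsto_snd.mono_right nhdsWithin_le_nhds) tendsto_const_nhds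
    · filter_upwards [prod_mem_prod self_mem_nhdsWithin self_mem_nhdsWithin] with q hq
      exact lineMap_mem _ (subset_affineSpan ℝ C hq.1) hq.2
  -- Replacing `b` by a nearby `c ∈ C`, every `w` near `x` is a combination of `c` and a point
  -- of `C` near `a`.
  have hneBot : (𝓝[C] b).NeBot := mem_closure_iff_nhdsWithin_neBot.1 hb
  obtain ⟨c, hc, hcC⟩ := ((hlim.eventually_mem hCa).curry.and self_mem_nhdsWithin).exists
  have hCx : C ∈ 𝓝[affineSpan ℝ C] x := by
    filter_upwards [hc] with w hw
    have hwC := hC.lineMap_mem hcC hw ⟨ht₀.le, ht₁.le⟩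
    rwa [lineMap_lineMap_right, mul_inv_cancel₀ ht₀.ne', lineMap_apply_one] at hwC
  exact mem_ri_iff.2 ⟨mem_of_mem_nhdsWithin hxspan hCx, hCx⟩

theorem isRadialCore_ri_of_subset_closure (hC : Convex ℝ C) (hCS : C ⊆ S) (hSC : S ⊆ closure C) :
    IsRadialCore (ri C) S where
  subset := ri_subset.trans hCS
  openSegment_subset _ ha _ hb := openSegment_ri_closure_subset_ri hC ha (hSC hb)
  eventually_lineMap_mem _ ha _ hb :=
    (eventually_lineMap_mem_of_mem_ri ha (closure_subset_affineSpan C (hSC hb))).mono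
      fun _ ht ↦ hCS ht

theorem ri_nonempty_of_convex (hC : Convex ℝ C) (hne : C.Nonempty) : (ri C).Nonempty := by
  rw [ri_eq_intrinsicInterior]
  exact hne.intrinsicInterior hC

theorem ri_eq_of_subset_closure (hC : Convex ℝ C) (hCS : C ⊆ S) (hSC : S ⊆ closure C) :
    ri S = ri C := by
  refine Subset.antisymm (fun a ha ↦ ?_) fun a ha ↦ ?_
  · obtain ⟨c, hc⟩ := ri_nonempty_of_convex hC (closure_nonempty_iff.1 ⟨a, hSC ha.1⟩)
    exact (isRadialCore_ri_of_subset_closure hC hCS hSC).mem_of_eventually_lineMap_mem hc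
      (eventually_lineMap_mem_of_mem_ri ha (subset_affineSpan ℝ S (hCS hc.1)))
  · rw [mem_ri_iff] at ha ⊢
    rw [affineSpan_eq_of_subset_closure hCS hSC]
    exact ⟨hCS ha.1, mem_of_superset ha.2 hCS⟩

theorem NearlyConvex.isRadialCore_ri (hS : NearlyConvex S) : IsRadialCore (ri S) S := by
  obtain ⟨C, hC, hCS, hSC⟩ := hS
  rw [ri_eq_of_subset_closure hC hCS hSC]
  exact isRadialCore_ri_of_subset_closure hC hCS hSC

theorem NearlyConvex.ri_nonempty (hS : NearlyConvex S) (hne : S.Nonempty) : (ri S).Nonempty := by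
  obtain ⟨C, hC, hCS, hSC⟩ := hS
  rw [ri_eq_of_subset_closure hC hCS hSC]
  exact ri_nonempty_of_convex hC (closure_nonempty_iff.1 (hne.mono hSC))

theorem IsRadialCore.ri_eq (h : IsRadialCore D S) (hne : D.Nonempty) : ri S = D := by
  have hS : NearlyConvex S := h.nearlyConvex hne
  exact Subset.antisymm (hS.isRadialCore_ri.subset_of_nonempty h hne)
    (h.subset_of_nonempty hS.isRadialCore_ri (hS.ri_nonempty (hne.mono h.subset)))

end RelativeInterior

namespace NearlyConvex

section Operations

variable {E G : Type*} [NormedAddCommGroup E] [NormedSpace ℝ E] [FiniteDimensional ℝ E]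
  [NormedAddCommGroup G] [NormedSpace ℝ G] {S T : Set E}

theorem preimage (hS : NearlyConvex S) (f : G →ᵃ[ℝ] E) (hne : (f ⁻¹' ri S).Nonempty) :
    NearlyConvex (f ⁻¹' S) :=
  (hS.isRadialCore_ri.preimage f).nearlyConvex hne

theorem inter (hS : NearlyConvex S) (hT : NearlyConvex T) (hne : (ri S ∩ ri T).Nonempty) :
    NearlyConvex (S ∩ T) :=
  (hS.isRadialCore_ri.inter hT.isRadialCore_ri).nearlyConvex hne

theorem ri_inter (hS : NearlyConvex S) (hT : NearlyConvex T) (hne : (ri S ∩ ri T).Nonempty) :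
    ri (S ∩ T) = ri S ∩ ri T :=
  (hS.isRadialCore_ri.inter hT.isRadialCore_ri).ri_eq hne

variable [FiniteDimensional ℝ G]

theorem ri_image (hS : NearlyConvex S) (f : E →ᵃ[ℝ] G) : ri (f '' S) = f '' ri S := by
  rcases S.eq_empty_or_nonempty with rfl | hne
  · simp only [image_empty, subset_empty_iff.1 ri_subset]
  · exact (hS.isRadialCore_ri.image f).ri_eq ((hS.ri_nonempty hne).image f)

theorem ri_preimage (hS : NearlyConvex S) (f : G →ᵃ[ℝ] E) (hne : (f ⁻¹' ri S).Nonempty) :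
    ri (f ⁻¹' S) = f ⁻¹' ri S :=
  (hS.isRadialCore_ri.preimage f).ri_eq hne

end Operations

section SetValued

variable {E P : Type*} [NormedAddCommGroup E] [NormedSpace ℝ E] [FiniteDimensional ℝ E]
  [NormedAddCommGroup P] [NormedSpace ℝ P] [FiniteDimensional ℝ P] {F : E → Set P}

theorem ri_domSV (hF : NearlyConvex (gph F)) : ri (domSV F) = Prod.fst '' ri (gph F) := by
  have hdom : domSV F = Prod.fst '' gph F := by
    ext x
    simp [domSV, gph, Set.Nonempty]
  rw [hdom]
  exact hF.ri_image AffineMap.fst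

theorem ri_apply (hF : NearlyConvex (gph F)) {x : E} (hx : x ∈ ri (domSV F)) :
    ri (F x) = Prod.mk x ⁻¹' ri (gph F) := by
  rw [hF.ri_domSV] at hx
  obtain ⟨⟨x, y⟩, hy, rfl⟩ := hx
  exact hF.ri_preimage ((AffineMap.const ℝ P x).prod (AffineMap.id ℝ P)) ⟨y, hy⟩

theorem mem_ri_gph_iff (hF : NearlyConvex (gph F)) {q : E × P} :
    q ∈ ri (gph F) ↔ q.1 ∈ ri (domSV F) ∧ q.2 ∈ ri (F q.1) := by
  constructor
  · intro hq
    have hx : q.1 ∈ ri (domSV F) := hF.ri_domSV ▸ mem_image_of_mem Prod.fst hq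
    exact ⟨hx, by rwa [hF.ri_apply hx]⟩
  · rintro ⟨hx, hy⟩
    rwa [hF.ri_apply hx] at hy

end SetValued

end NearlyConvex

theorem restriction_nearlyConvex_general {E P : Type*}
    [NormedAddCommGroup E] [NormedSpace ℝ E] [FiniteDimensional ℝ E]
    [NormedAddCommGroup P] [NormedSpace ℝ P] [FiniteDimensional ℝ P]
    (F : E → Set P) (Ω : Set E) (hF : NearlyConvex (gph F)) (hΩ : NearlyConvex Ω)
    (hqc : (ri (domSV F) ∩ ri Ω).Nonempty) :
    NearlyConvex (gph (fun x => {y | x ∈ Ω ∧ y ∈ F x})) ∧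
      ri (gph (fun x => {y | x ∈ Ω ∧ y ∈ F x})) =
        {q : E × P | q.1 ∈ ri (domSV F) ∩ ri Ω ∧ q.2 ∈ ri (F q.1)} := by
  let π : E × P →ᵃ[ℝ] E := AffineMap.fst
  have hgph : gph (fun x => {y | x ∈ Ω ∧ y ∈ F x}) = gph F ∩ π ⁻¹' Ω := inter_comm _ _
  rw [hF.ri_domSV] at hqc
  obtain ⟨_, ⟨q₀, hq₀, rfl⟩, hq₀Ω⟩ := hqc
  have hcyl : NearlyConvex (π ⁻¹' Ω) := hΩ.preimage π ⟨q₀, hq₀Ω⟩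
  have hri : ri (π ⁻¹' Ω) = π ⁻¹' ri Ω := hΩ.ri_preimage π ⟨q₀, hq₀Ω⟩
  have hne : (ri (gph F) ∩ ri (π ⁻¹' Ω)).Nonempty := ⟨q₀, hq₀, hri ▸ hq₀Ω⟩
  rw [hgph]
  refine ⟨hF.inter hcyl hne, ?_⟩
  ext q
  rw [hF.ri_inter hcyl hne, hri, mem_inter_iff, hF.mem_ri_gph_iff]
  exact and_right_comm

theorem restriction_nearlyConvex (n p : ℕ)
    (F : EuclideanSpace ℝ (Fin n) → Set (EuclideanSpace ℝ (Fin p)))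
    (Ω : Set (EuclideanSpace ℝ (Fin n)))
    (hF : NearlyConvex (gph F)) (hΩ : NearlyConvex Ω)
    (hqc : (ri (domSV F) ∩ ri Ω).Nonempty) :
    NearlyConvex (gph (fun x => {y | x ∈ Ω ∧ y ∈ F x})) ∧
      ri (gph (fun x => {y | x ∈ Ω ∧ y ∈ F x})) =
        {q : EuclideanSpace ℝ (Fin n) × EuclideanSpace ℝ (Fin p) |
          q.1 ∈ ri (domSV F) ∩ ri Ω ∧ q.2 ∈ ri (F q.1)} :=
  restriction_nearlyConvex_general F Ω hF hΩ hqc
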